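/- arXiv:2208.09611 — 2 statements merged into one kernel-verified Lean document; each statement's English description precedes it below -/
import Mathlib

section
/- Let S and A be nonempty finite sets, let q : S × A × S → ℝ satisfy q(s'|a,s) ≥ 0 and ∑_{s'∈S} q(s'|a,s) = 1 for all s ∈ S, a ∈ A, let r : S × A → ℝ, let μ : S → ℝ with μ(s) > 0 for all s, and let γ ∈ [0,1). Define the weighted soft Bellman operator T on functions V : S → ℝ by T[V](s) := μ(s)·ln(∑_{a∈A} exp((r(s,a) + γ·∑_{s'∈S} q(s'|a,s)·V(s'))/μ(s))). Then T is a γ-contraction in the supremum norm: for all V, V' : S → ℝ, max_{s∈S} |T[V](s) − T[V'](s)| ≤ γ·max_{s∈S} |V(s) − V'(s)|. -/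
/-!
The map `x ↦ m * log (∑ a, exp (x a / m))` is monotone and commutes with adding a constant to
all coordinates, so `x ≤ y + c` coordinatewise gives the same bound on its values
(`softmax_le_add`). The Bellman backup `r + γ ∑ q V` moves by at most `γ ‖V - V'‖` in each
coordinate, because `q` averages (`average_le_add`). Applying this to `(V, V')` and to
`(V', V)` bounds the absolute difference at each state.
-/

open Finset

/-- The scaled log-sum-exp is monotone and equivariant under constant shifts. -/
lemma softmax_le_add {A : Type*} [Fintype A] [Nonempty A] (x y : A → ℝ) (m c : ℝ) (hm : 0 < m)
    (h : ∀ a, x a ≤ y a + c) :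
    m * Real.log (∑ a : A, Real.exp (x a / m))
      ≤ m * Real.log (∑ a : A, Real.exp (y a / m)) + c := by
  have hx : 0 < ∑ a : A, Real.exp (x a / m) :=
    Finset.sum_pos (fun a _ => Real.exp_pos _) Finset.univ_nonempty
  have hy : 0 < ∑ a : A, Real.exp (y a / m) :=
    Finset.sum_pos (fun a _ => Real.exp_pos _) Finset.univ_nonempty
  have hsum : ∑ a : A, Real.exp (x a / m)
      ≤ (∑ a : A, Real.exp (y a / m)) * Real.exp (c / m) := by
    rw [Finset.sum_mul]
    refine Finset.sum_le_sum fun a _ => ?_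
    rw [← Real.exp_add, ← add_div]
    exact Real.exp_le_exp.mpr (div_le_div_of_nonneg_right (h a) hm.le)
  have hlog := Real.log_le_log hx hsum
  rw [Real.log_mul hy.ne' (Real.exp_pos _).ne', Real.log_exp] at hlog
  calc m * Real.log (∑ a : A, Real.exp (x a / m))
      ≤ m * (Real.log (∑ a : A, Real.exp (y a / m)) + c / m) :=
        mul_le_mul_of_nonneg_left hlog hm.le
    _ = m * Real.log (∑ a : A, Real.exp (y a / m)) + c := by
        rw [mul_add, mul_div_cancel₀ c hm.ne']

lemma average_le_add {S : Type*} [Fintype S] (p V W : S → ℝ) (M : ℝ) (hp0 : ∀ s, 0 ≤ p s)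
    (hp1 : ∑ s : S, p s = 1) (h : ∀ s, V s ≤ W s + M) :
    ∑ s : S, p s * V s ≤ ∑ s : S, p s * W s + M := by
  calc ∑ s : S, p s * V s ≤ ∑ s : S, p s * (W s + M) :=
        Finset.sum_le_sum fun s _ => mul_le_mul_of_nonneg_left (h s) (hp0 s)
    _ = ∑ s : S, p s * W s + M := by
        simp only [mul_add, Finset.sum_add_distrib, ← Finset.sum_mul, hp1, one_mul]

/-- The weighted soft Bellman operator
`T[V](s) = μ(s)·ln(∑_a exp((r(s,a) + γ·∑_{s'} q(s'|a,s)·V(s'))/μ(s)))`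
is a `γ`-contraction in the supremum norm. Here `q s a s'` denotes the transition
probability `q(s'|a,s)`. -/
theorem weighted_soft_bellman_contraction
    {S A : Type*} [Fintype S] [Nonempty S] [Fintype A] [Nonempty A]
    (q : S → A → S → ℝ) (hq0 : ∀ s a s', 0 ≤ q s a s')
    (hq1 : ∀ s a, ∑ s' : S, q s a s' = 1)
    (r : S → A → ℝ) (μ : S → ℝ) (hμ : ∀ s, 0 < μ s)
    (γ : ℝ) (hγ0 : 0 ≤ γ) (hγ1 : γ < 1) :
    let T : (S → ℝ) → S → ℝ := fun V s =>
      μ s * Real.log (∑ a : A, Real.exp ((r s a + γ * ∑ s' : S, q s a s' * V s') / μ s))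
    ∀ V V' : S → ℝ,
      Finset.univ.sup' Finset.univ_nonempty (fun s : S => |T V s - T V' s|)
        ≤ γ * Finset.univ.sup' Finset.univ_nonempty (fun s : S => |V s - V' s|) := by
  intro T V V'
  have key : ∀ (V W : S → ℝ) (M : ℝ), (∀ s, V s ≤ W s + M) → ∀ s, T V s ≤ T W s + γ * M := by
    intro V W M h s
    refine softmax_le_add _ _ (μ s) (γ * M) (hμ s) fun a => ?_
    have := mul_le_mul_of_nonneg_left (average_le_add (q s a) V W M (hq0 s a) (hq1 s a) h) hγ0
    linarith
  set M := Finset.univ.sup' Finset.univ_nonempty (fun s : S => |V s - V' s|) with hM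
  have hle : ∀ s, |V s - V' s| ≤ M := fun s =>
    Finset.le_sup' (fun s : S => |V s - V' s|) (Finset.mem_univ s)
  refine Finset.sup'_le _ _ fun s _ => abs_sub_le_iff.mpr ⟨?_, ?_⟩
  · have := key V V' M (fun s => by linarith [(abs_sub_le_iff.mp (hle s)).1]) s
    linarith
  · have := key V' V M (fun s => by linarith [(abs_sub_le_iff.mp (hle s)).2]) s
    linarith
end

section
/- Let S and A be nonempty finite sets, let q : S × A × S → ℝ satisfy q(s'|a,s) ≥ 0 and ∑_{s'∈S} q(s'|a,s) = 1 for all s, a, let r : S × A → ℝ, let μ : S → ℝ with μ(s) > 0 for all s, and let γ ∈ [0,1). Define T[V](s) := μ(s)·ln(∑_{a∈A} exp((r(s,a) + γ·∑_{s'∈S} q(s'|a,s)·V(s'))/μ(s))). Then there exists a unique function V* : S → ℝ such that T[V*] = V*. -/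
/-!
The weighted soft Bellman operator is a `γ`-contraction of `S → ℝ` for the sup metric, so
Banach's fixed point theorem applies. The contraction estimate rests on the weighted
log-sum-exp being 1-Lipschitz for the sup norm (`mul_log_sum_exp_le`: it is monotone and
commutes with adding constants), and on averaging against the probability vector `q s a`
being 1-Lipschitz too (`sum_mul_le_add_dist`).
-/

lemma mul_log_sum_exp_le {A : Type*} [Fintype A] [Nonempty A] {m c : ℝ} (hm : 0 < m)
    {x y : A → ℝ} (h : ∀ a, x a ≤ y a + c) :
    m * Real.log (∑ a, Real.exp (x a / m)) ≤
      m * Real.log (∑ a, Real.exp (y a / m)) + c := by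
  have hpos : ∀ z : A → ℝ, 0 < ∑ a, Real.exp (z a / m) := fun z =>
    Finset.sum_pos (fun a _ => Real.exp_pos _) Finset.univ_nonempty
  have hle : ∑ a, Real.exp (x a / m) ≤ (∑ a, Real.exp (y a / m)) * Real.exp (c / m) := by
    rw [Finset.sum_mul]
    refine Finset.sum_le_sum fun a _ => ?_
    rw [← Real.exp_add, ← add_div]
    exact Real.exp_le_exp.2 (div_le_div_of_nonneg_right (h a) hm.le)
  have hlog := Real.log_le_log (hpos x) hle
  rw [Real.log_mul (hpos y).ne' (Real.exp_pos _).ne', Real.log_exp] at hlog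
  calc m * Real.log (∑ a, Real.exp (x a / m))
      ≤ m * (Real.log (∑ a, Real.exp (y a / m)) + c / m) :=
        mul_le_mul_of_nonneg_left hlog hm.le
    _ = m * Real.log (∑ a, Real.exp (y a / m)) + c := by field_simp

lemma sum_mul_le_add_dist {S : Type*} [Fintype S] {p : S → ℝ} (hp0 : ∀ s, 0 ≤ p s)
    (hp1 : ∑ s, p s = 1) (V W : S → ℝ) :
    ∑ s, p s * V s ≤ ∑ s, p s * W s + dist V W := by
  calc ∑ s, p s * V s ≤ ∑ s, p s * (W s + dist V W) := by
        refine Finset.sum_le_sum fun s _ => mul_le_mul_of_nonneg_left ?_ (hp0 s)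
        have h1 := dist_le_pi_dist V W s
        have h2 := le_abs_self (V s - W s)
        rw [Real.dist_eq] at h1
        linarith
    _ = ∑ s, p s * W s + dist V W := by
        simp only [mul_add, Finset.sum_add_distrib, ← Finset.sum_mul, hp1, one_mul]

/-- Existence and uniqueness of the soft value function: the weighted soft Bellman
operator `T[V](s) = μ(s)·ln(∑_a exp((r(s,a) + γ·∑_{s'} q(s'|a,s)·V(s'))/μ(s)))` has a
unique fixed point `V*`. Here `q s a s'` denotes the transition probability
`q(s'|a,s)`. -/
theorem weighted_soft_bellman_unique_fixed_point
    {S A : Type*} [Fintype S] [Nonempty S] [Fintype A] [Nonempty A]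
    (q : S → A → S → ℝ) (hq0 : ∀ s a s', 0 ≤ q s a s')
    (hq1 : ∀ s a, ∑ s' : S, q s a s' = 1)
    (r : S → A → ℝ) (μ : S → ℝ) (hμ : ∀ s, 0 < μ s)
    (γ : ℝ) (hγ0 : 0 ≤ γ) (hγ1 : γ < 1) :
    ∃! Vstar : S → ℝ,
      (fun s =>
        μ s * Real.log
          (∑ a : A, Real.exp ((r s a + γ * ∑ s' : S, q s a s' * Vstar s') / μ s)))
        = Vstar := by
  set T : (S → ℝ) → S → ℝ := fun V s =>
    μ s * Real.log (∑ a : A, Real.exp ((r s a + γ * ∑ s' : S, q s a s' * V s') / μ s)) with hT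
  have key : ∀ V W s, T V s ≤ T W s + γ * dist V W := fun V W s =>
    mul_log_sum_exp_le (hμ s) fun a => by
      have h := mul_le_mul_of_nonneg_left (sum_mul_le_add_dist (hq0 s a) (hq1 s a) V W) hγ0
      linarith
  have hlip : LipschitzWith ⟨γ, hγ0⟩ T := LipschitzWith.of_dist_le_mul fun V W => by
    change dist (T V) (T W) ≤ γ * dist V W
    refine (dist_pi_le_iff (mul_nonneg hγ0 dist_nonneg)).2 fun s => ?_
    have h1 := key V W s
    have h2 := key W V s
    rw [dist_comm W V] at h2
    rw [Real.dist_eq, abs_le]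
    constructor <;> linarith
  have hc : ContractingWith ⟨γ, hγ0⟩ T := ⟨by exact_mod_cast hγ1, hlip⟩
  exact ⟨ContractingWith.fixedPoint T hc, hc.fixedPoint_isFixedPt,
    fun V hV => hc.fixedPoint_unique hV⟩
end
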